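/- arXiv:1306.5358 — 3 statements merged into one kernel-verified Lean document; each statement's English description precedes it below -/
import Mathlib

section
/- For a fixed n×n complex matrix B and 0 < p ≤ 1, the map A ↦ tr((B* A^p B)^{1/p}) is concave on positive definite n×n matrices; i.e., for positive definite A₀, A₁ and t ∈ [0,1], tr((B* ((1−t)A₀ + tA₁)^p B)^{1/p}) ≥ (1−t)·tr((B* A₀^p B)^{1/p}) + t·tr((B* A₁^p B)^{1/p}). -/
open Matrix ComplexOrder

/-- Functional calculus for Hermitian matrices: apply `f` to the eigenvalues. -/
noncomputable def mfun {m : Type*} [Fintype m] [DecidableEq m] (f : ℝ → ℝ)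
    (A : Matrix m m ℂ) : Matrix m m ℂ :=
  if hA : A.IsHermitian then
    (hA.eigenvectorUnitary : Matrix m m ℂ) *
      Matrix.diagonal (fun i => (f (hA.eigenvalues i) : ℂ)) *
      (star (hA.eigenvectorUnitary : Matrix m m ℂ))
  else 0

/-- Real matrix power via the functional calculus. -/
noncomputable def mpow {m : Type*} [Fintype m] [DecidableEq m]
    (A : Matrix m m ℂ) (p : ℝ) : Matrix m m ℂ :=
  mfun (fun x => x ^ p) A

section EpsteinAux

open MeasureTheory Set

variable {m : Type*} [Fintype m] [DecidableEq m]

lemma mfun_eq_cfc {A : Matrix m m ℂ} (hA : A.IsHermitian) (f : ℝ → ℝ) : mfun f A = cfc f A := by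
  rw [hA.cfc_eq f, Matrix.IsHermitian.cfc, Unitary.conjStarAlgAut_apply, mfun, dif_pos hA]
  rfl

lemma mfun_id {A : Matrix m m ℂ} (hA : A.IsHermitian) : mfun (fun x => x) A = A := by
  rw [mfun_eq_cfc hA]
  exact cfc_id' ℝ A hA.isSelfAdjoint

lemma mfun_one {A : Matrix m m ℂ} (hA : A.IsHermitian) : mfun (fun _ => 1) A = 1 := by
  rw [mfun_eq_cfc hA]
  exact cfc_const_one ℝ A hA

lemma mfun_herm (A : Matrix m m ℂ) (f : ℝ → ℝ) : (mfun f A).IsHermitian := by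
  by_cases hA : A.IsHermitian
  · rw [mfun_eq_cfc hA]
    exact cfc_predicate f A
  · rw [mfun, dif_neg hA]
    exact Matrix.isHermitian_zero

lemma mfun_comp {A : Matrix m m ℂ} (hA : A.IsHermitian) (g f : ℝ → ℝ) :
    mfun g (mfun f A) = mfun (fun x => g (f x)) A := by
  rw [mfun_eq_cfc (mfun_herm A f), mfun_eq_cfc hA, mfun_eq_cfc hA]
  have hfin := A.finite_real_spectrum
  exact (cfc_comp' g f A ((hfin.image f).continuousOn g) (hfin.continuousOn f) hA).symm

lemma mfun_congr {A : Matrix m m ℂ} (hA : A.IsHermitian) (g f : ℝ → ℝ)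
    (h : ∀ i, g (hA.eigenvalues i) = f (hA.eigenvalues i)) :
    mfun g A = mfun f A := by
  simp only [mfun, dif_pos hA, h]

lemma mfun_posSemidef {A : Matrix m m ℂ} (hA : A.IsHermitian) (f : ℝ → ℝ)
    (h : ∀ i, 0 ≤ f (hA.eigenvalues i)) : (mfun f A).PosSemidef := by
  rw [mfun, dif_pos hA]
  have : (Matrix.diagonal (fun i => (f (hA.eigenvalues i) : ℂ))).PosSemidef := by
    refine Matrix.PosSemidef.diagonal ?_
    intro i
    have := h i
    simpa using this
  exact this.mul_mul_conjTranspose_same _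

/-- Squared moduli of the entries of `K` in the eigenbases of `A` and `Y`. -/
noncomputable def wt {A Y : Matrix m m ℂ} (hA : A.IsHermitian) (hY : Y.IsHermitian)
    (K : Matrix m m ℂ) (i j : m) : ℝ :=
  Complex.normSq ((star (hA.eigenvectorUnitary : Matrix m m ℂ) * K *
    (hY.eigenvectorUnitary : Matrix m m ℂ)) i j)

lemma wt_nonneg {A Y : Matrix m m ℂ} (hA : A.IsHermitian) (hY : Y.IsHermitian)
    (K : Matrix m m ℂ) (i j : m) : 0 ≤ wt hA hY K i j := Complex.normSq_nonneg _

lemma trace_diag (M : Matrix m m ℂ) (d e : m → ℝ) :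
    (Mᴴ * Matrix.diagonal (fun i => (d i : ℂ)) * M * Matrix.diagonal (fun i => (e i : ℂ))).trace.re
      = ∑ i, ∑ j, d i * e j * Complex.normSq (M i j) := by
  rw [Finset.sum_comm]
  simp only [Matrix.trace, Matrix.diag, Matrix.mul_diagonal, Complex.re_sum]
  refine Finset.sum_congr rfl fun j _ => ?_
  rw [Matrix.mul_apply, Finset.sum_mul, Complex.re_sum]
  refine Finset.sum_congr rfl fun i _ => ?_
  simp only [Matrix.mul_diagonal, Matrix.conjTranspose_apply, Complex.normSq_apply]
  simp
  ring

lemma trace_formula {A Y : Matrix m m ℂ} (hA : A.IsHermitian) (hY : Y.IsHermitian)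
    (K : Matrix m m ℂ) (f g : ℝ → ℝ) :
    (Kᴴ * mfun f A * K * mfun g Y).trace.re =
      ∑ i, ∑ j, f (hA.eigenvalues i) * g (hY.eigenvalues j) * wt hA hY K i j := by
  simp only [wt]
  rw [← trace_diag, mfun, mfun, dif_pos hA, dif_pos hY]
  congr 1
  simp only [Matrix.star_eq_conjTranspose, Matrix.conjTranspose_mul,
    Matrix.conjTranspose_conjTranspose, ← Matrix.mul_assoc]
  rw [Matrix.trace_mul_comm]
  simp only [← Matrix.mul_assoc]

lemma scalar_par {s a y : ℝ} (hs : 0 < s) (ha : 0 < a) (hy : 0 ≤ y) (k w : ℂ) :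
    a * y / (s * a + y) * Complex.normSq k ≤
      a * Complex.normSq w + s⁻¹ * (y * Complex.normSq (k - w)) := by
  have hpos : 0 < s * a + y := by positivity
  have key : a * Complex.normSq w + s⁻¹ * (y * Complex.normSq (k - w)) -
      a * y / (s * a + y) * Complex.normSq k =
      (s * (s * a + y))⁻¹ * Complex.normSq ((s * a + y : ℝ) * w - (y : ℝ) * k) := by
    simp only [Complex.normSq_apply, Complex.sub_re, Complex.sub_im, Complex.mul_re,
      Complex.mul_im, Complex.ofReal_re, Complex.ofReal_im]
    field_simp
    ring
  have : 0 ≤ (s * (s * a + y))⁻¹ * Complex.normSq ((s * a + y : ℝ) * w - (y : ℝ) * k) :=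
    mul_nonneg (by positivity) (Complex.normSq_nonneg _)
  linarith

lemma scalar_par_eq {s a y : ℝ} (hs : 0 < s) (ha : 0 < a) (hy : 0 ≤ y) (k : ℂ) :
    a * y / (s * a + y) * Complex.normSq k =
      a * Complex.normSq (((y / (s * a + y) : ℝ) : ℂ) * k) +
        s⁻¹ * (y * Complex.normSq (k - ((y / (s * a + y) : ℝ) : ℂ) * k)) := by
  have hpos : 0 < s * a + y := by positivity
  simp only [Complex.normSq_apply, Complex.sub_re, Complex.sub_im, Complex.mul_re,
      Complex.mul_im, Complex.ofReal_re, Complex.ofReal_im]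
  field_simp
  ring

/-- The trace of the parallel sum. -/
noncomputable def parG {A Y : Matrix m m ℂ} (hA : A.IsHermitian) (hY : Y.IsHermitian)
    (K : Matrix m m ℂ) (s : ℝ) : ℝ :=
  ∑ i, ∑ j, hA.eigenvalues i * hY.eigenvalues j /
    (s * hA.eigenvalues i + hY.eigenvalues j) * wt hA hY K i j

/-- The variational functional. -/
noncomputable def parQ (A Y K W : Matrix m m ℂ) (s : ℝ) : ℝ :=
  (Wᴴ * A * W).trace.re + s⁻¹ * ((K - W)ᴴ * (K - W) * Y).trace.re

lemma parQ_eq {A Y : Matrix m m ℂ} (hA : A.IsHermitian) (hY : Y.IsHermitian)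
    (K W : Matrix m m ℂ) (s : ℝ) :
    parQ A Y K W s = ∑ i, ∑ j, (hA.eigenvalues i * wt hA hY W i j +
      s⁻¹ * (hY.eigenvalues j * wt hA hY (K - W) i j)) := by
  have h1 := trace_formula hA hY W (fun x => x) (fun _ => 1)
  have h2 := trace_formula hA hY (K - W) (fun _ => 1) (fun x => x)
  rw [mfun_id hA, mfun_one hY, Matrix.mul_one] at h1
  rw [mfun_id hY, mfun_one hA, Matrix.mul_one] at h2
  rw [parQ, h1, h2]
  simp only [Finset.sum_add_distrib, Finset.mul_sum, mul_one, one_mul]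

lemma parG_le {A Y : Matrix m m ℂ} (hA : A.PosDef) (hY : Y.PosSemidef)
    (K W : Matrix m m ℂ) {s : ℝ} (hs : 0 < s) :
    parG hA.1 hY.1 K s ≤ parQ A Y K W s := by
  rw [parQ_eq hA.1 hY.1, parG]
  refine Finset.sum_le_sum fun i _ => Finset.sum_le_sum fun j _ => ?_
  have := scalar_par hs (hA.eigenvalues_pos i) (hY.eigenvalues_nonneg j)
    ((star (hA.1.eigenvectorUnitary : Matrix m m ℂ) * K *
      (hY.1.eigenvectorUnitary : Matrix m m ℂ)) i j)
    ((star (hA.1.eigenvectorUnitary : Matrix m m ℂ) * W *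
      (hY.1.eigenvectorUnitary : Matrix m m ℂ)) i j)
  simpa only [wt, Matrix.mul_sub, Matrix.sub_mul, Matrix.sub_apply] using this

lemma exists_parG_eq {A Y : Matrix m m ℂ} (hA : A.PosDef) (hY : Y.PosSemidef)
    (K : Matrix m m ℂ) {s : ℝ} (hs : 0 < s) :
    ∃ W, parG hA.1 hY.1 K s = parQ A Y K W s := by
  set U : Matrix m m ℂ := (hA.1.eigenvectorUnitary : Matrix m m ℂ) with hU
  set V : Matrix m m ℂ := (hY.1.eigenvectorUnitary : Matrix m m ℂ) with hV
  let M : Matrix m m ℂ := star U * K * V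
  let N : Matrix m m ℂ := Matrix.of fun i j =>
    ((hY.1.eigenvalues j / (s * hA.1.eigenvalues i + hY.1.eigenvalues j) : ℝ) : ℂ) * M i j
  have hUU : star U * U = 1 := Unitary.coe_star_mul_self _
  have hVV : star V * V = 1 := Unitary.coe_star_mul_self _
  have hN : star U * (U * N * star V) * V = N := by
    calc star U * (U * N * star V) * V = (star U * U) * N * (star V * V) := by
          simp only [Matrix.mul_assoc]
      _ = N := by rw [hUU, hVV, Matrix.one_mul, Matrix.mul_one]
  refine ⟨U * N * star V, ?_⟩
  rw [parQ_eq hA.1 hY.1, parG]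
  refine Finset.sum_congr rfl fun i _ => Finset.sum_congr rfl fun j _ => ?_
  have := scalar_par_eq hs (hA.eigenvalues_pos i) (hY.eigenvalues_nonneg j) (M i j)
  simp only [wt, Matrix.mul_sub, Matrix.sub_mul, Matrix.sub_apply]
  rw [← hU, ← hV, hN]
  exact this

lemma parQ_lin (A₀ A₁ Y₀ Y₁ K W : Matrix m m ℂ) (s t : ℝ) :
    parQ (((1 - t : ℝ) : ℂ) • A₀ + ((t : ℝ) : ℂ) • A₁) (((1 - t : ℝ) : ℂ) • Y₀ + ((t : ℝ) : ℂ) • Y₁)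
      K W s = (1 - t) * parQ A₀ Y₀ K W s + t * parQ A₁ Y₁ K W s := by
  simp only [parQ, Matrix.mul_add, Matrix.add_mul, Matrix.mul_smul, Matrix.smul_mul,
    Matrix.trace_add, Matrix.trace_smul, Complex.add_re, smul_eq_mul, Complex.re_ofReal_mul]
  ring

lemma comb_posDef {A₀ A₁ : Matrix m m ℂ} (hA₀ : A₀.PosDef) (hA₁ : A₁.PosDef) {t : ℝ}
    (ht0 : 0 ≤ t) (ht1 : t ≤ 1) :
    (((1 - t : ℝ) : ℂ) • A₀ + ((t : ℝ) : ℂ) • A₁).PosDef := by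
  rcases ht0.eq_or_lt with rfl | h0
  · simpa using hA₀
  · refine Matrix.PosDef.posSemidef_add (hA₀.posSemidef.smul ?_) (hA₁.smul ?_)
    · exact_mod_cast sub_nonneg.2 ht1
    · exact_mod_cast h0

lemma comb_posSemidef {A₀ A₁ : Matrix m m ℂ} (hA₀ : A₀.PosSemidef) (hA₁ : A₁.PosSemidef) {t : ℝ}
    (ht0 : 0 ≤ t) (ht1 : t ≤ 1) :
    (((1 - t : ℝ) : ℂ) • A₀ + ((t : ℝ) : ℂ) • A₁).PosSemidef := by
  refine (hA₀.smul ?_).add (hA₁.smul ?_)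
  · exact_mod_cast sub_nonneg.2 ht1
  · exact_mod_cast ht0

lemma parG_concave {A₀ A₁ Y₀ Y₁ : Matrix m m ℂ} (hA₀ : A₀.PosDef) (hA₁ : A₁.PosDef)
    (hY₀ : Y₀.PosSemidef) (hY₁ : Y₁.PosSemidef) (K : Matrix m m ℂ) {s : ℝ} (hs : 0 < s) {t : ℝ}
    (ht0 : 0 ≤ t) (ht1 : t ≤ 1) :
    (1 - t) * parG hA₀.1 hY₀.1 K s + t * parG hA₁.1 hY₁.1 K s ≤
      parG (comb_posDef hA₀ hA₁ ht0 ht1).1 (comb_posSemidef hY₀ hY₁ ht0 ht1).1 K s := by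
  obtain ⟨W, hW⟩ := exists_parG_eq (comb_posDef hA₀ hA₁ ht0 ht1)
    (comb_posSemidef hY₀ hY₁ ht0 ht1) K hs
  rw [hW, parQ_lin]
  have h1 := parG_le hA₀ hY₀ K W hs
  have h2 := parG_le hA₁ hY₁ K W hs
  have h3 : 0 ≤ 1 - t := sub_nonneg.2 ht1
  gcongr

lemma scalar_integrand {q s a y : ℝ} (hq : q ∈ Ioo (0 : ℝ) 1) (hs : 0 < s) (ha : 0 < a)
    (hy : 0 ≤ y) :
    a * Real.rpowIntegrand₀₁ q s (y / a) = s ^ (q - 1) * (a * y / (s * a + y)) := by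
  rw [Real.rpowIntegrand₀₁_eq_pow_div hq hs.le (by positivity)]
  have : 0 < s * a + y := by positivity
  have : 0 < s + y / a := by positivity
  field_simp

/-- The integrated form. -/
lemma lieb_integral {q : ℝ} (hq : q ∈ Ioo (0 : ℝ) 1) {A Y : Matrix m m ℂ} (hA : A.PosDef)
    (hY : Y.PosSemidef) (K : Matrix m m ℂ) :
    IntegrableOn (fun s => s ^ (q - 1) * parG hA.1 hY.1 K s) (Ioi 0) ∧
    (Kᴴ * mpow A (1 - q) * K * mpow Y q).trace.re =
      (∫ t in Ioi 0, Real.rpowIntegrand₀₁ q t 1)⁻¹ *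
        ∫ s in Ioi 0, s ^ (q - 1) * parG hA.1 hY.1 K s := by
  have hEq : EqOn (fun s => ∑ i, ∑ j, (hA.1.eigenvalues i * wt hA.1 hY.1 K i j) *
      Real.rpowIntegrand₀₁ q s (hY.1.eigenvalues j / hA.1.eigenvalues i))
      (fun s => s ^ (q - 1) * parG hA.1 hY.1 K s) (Ioi 0) := by
    intro s hs
    simp only [parG, Finset.mul_sum]
    refine Finset.sum_congr rfl fun i _ => Finset.sum_congr rfl fun j _ => ?_
    have := scalar_integrand hq hs (hA.eigenvalues_pos i) (hY.eigenvalues_nonneg j)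
    linear_combination (wt hA.1 hY.1 K i j) * this
  have hnn : ∀ i j, 0 ≤ hY.1.eigenvalues j / hA.1.eigenvalues i := fun i j =>
    div_nonneg (hY.eigenvalues_nonneg j) (hA.eigenvalues_pos i).le
  have hint : ∀ i j, IntegrableOn (fun s => (hA.1.eigenvalues i * wt hA.1 hY.1 K i j) *
      Real.rpowIntegrand₀₁ q s (hY.1.eigenvalues j / hA.1.eigenvalues i)) (Ioi 0) := fun i j =>
    (Real.integrableOn_rpowIntegrand₀₁_Ioi hq (hnn i j)).const_mul _
  refine ⟨?_, ?_⟩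
  · refine IntegrableOn.congr_fun ?_ hEq measurableSet_Ioi
    exact integrable_finsetSum _ fun i _ => integrable_finsetSum _ fun j _ => hint i j
  · rw [← setIntegral_congr_fun measurableSet_Ioi hEq,
      integral_finsetSum _ fun i _ => integrable_finsetSum _ fun j _ => hint i j, mpow, mpow,
      trace_formula hA.1 hY.1, Finset.mul_sum]
    refine Finset.sum_congr rfl fun i _ => ?_
    rw [integral_finsetSum _ fun j _ => hint i j, Finset.mul_sum]
    refine Finset.sum_congr rfl fun j _ => ?_
    rw [integral_const_mul]
    have h1 := Real.rpow_eq_const_mul_integral hq (hnn i j)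
    have ha := hA.eigenvalues_pos i
    have h2 : hA.1.eigenvalues i ^ (1 - q) * hY.1.eigenvalues j ^ q =
        hA.1.eigenvalues i * (hY.1.eigenvalues j / hA.1.eigenvalues i) ^ q := by
      rw [Real.div_rpow (hY.eigenvalues_nonneg j) ha.le, Real.rpow_sub ha, Real.rpow_one]
      ring
    rw [h2, h1]
    ring

/-- Lieb's concavity theorem. -/
lemma lieb_concave {q : ℝ} (hq : q ∈ Ioo (0 : ℝ) 1) {A₀ A₁ Y₀ Y₁ : Matrix m m ℂ}
    (hA₀ : A₀.PosDef) (hA₁ : A₁.PosDef)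
    (hY₀ : Y₀.PosSemidef) (hY₁ : Y₁.PosSemidef) (K : Matrix m m ℂ) {t : ℝ}
    (ht0 : 0 ≤ t) (ht1 : t ≤ 1) :
    (1 - t) * (Kᴴ * mpow A₀ (1 - q) * K * mpow Y₀ q).trace.re +
      t * (Kᴴ * mpow A₁ (1 - q) * K * mpow Y₁ q).trace.re ≤
    (Kᴴ * mpow (((1 - t : ℝ) : ℂ) • A₀ + ((t : ℝ) : ℂ) • A₁) (1 - q) * K *
      mpow (((1 - t : ℝ) : ℂ) • Y₀ + ((t : ℝ) : ℂ) • Y₁) q).trace.re := by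
  obtain ⟨i0, e0⟩ := lieb_integral hq hA₀ hY₀ K
  obtain ⟨i1, e1⟩ := lieb_integral hq hA₁ hY₁ K
  obtain ⟨i2, e2⟩ := lieb_integral hq (comb_posDef hA₀ hA₁ ht0 ht1)
    (comb_posSemidef hY₀ hY₁ ht0 ht1) K
  rw [e0, e1, e2]
  have hc := Real.integral_rpowIntegrand₀₁_one_pos hq
  have hmono := setIntegral_mono_on ((i0.const_mul (1 - t)).add (i1.const_mul t)) i2
    measurableSet_Ioi (fun s hs => by
      have h := parG_concave hA₀ hA₁ hY₀ hY₁ K hs ht0 ht1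
      have h' : 0 ≤ s ^ (q - 1) := Real.rpow_nonneg (le_of_lt hs) _
      have := mul_le_mul_of_nonneg_left h h'
      simp only [Pi.add_apply]
      linarith)
  have hadd := integral_add (i0.const_mul (1 - t)) (i1.const_mul t)
  rw [integral_const_mul, integral_const_mul] at hadd
  have hmono' := hadd.symm.le.trans hmono
  have := mul_le_mul_of_nonneg_left hmono' (inv_nonneg.2 hc.le)
  linarith

/-- Young's trace inequality. -/
lemma young_trace {p : ℝ} (hp0 : 0 < p) (hp1 : p < 1) {X Y : Matrix m m ℂ}
    (hX : X.PosSemidef) (hY : Y.PosSemidef) :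
    (X * mpow Y (1 - p)).trace.re ≤ p * (mpow X (1 / p)).trace.re + (1 - p) * Y.trace.re := by
  have h1 := trace_formula hX.1 hY.1 1 (fun x => x) (fun x => x ^ (1 - p))
  have h2 := trace_formula hX.1 hY.1 1 (fun x => x ^ (1 / p)) (fun _ => 1)
  have h3 := trace_formula hX.1 hY.1 1 (fun _ => 1) (fun x => x)
  simp only [mfun_id hX.1, mfun_id hY.1, mfun_one hX.1, mfun_one hY.1, Matrix.conjTranspose_one,
    Matrix.mul_one, Matrix.one_mul, one_mul, mul_one] at h1 h2 h3
  simp only [mpow]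
  rw [h1, h2, h3]
  simp only [Finset.mul_sum, ← Finset.sum_add_distrib]
  refine Finset.sum_le_sum fun i _ => Finset.sum_le_sum fun j _ => ?_
  have hx := hX.eigenvalues_nonneg i
  have hy := hY.eigenvalues_nonneg j
  have := Real.geom_mean_le_arith_mean2_weighted hp0.le (sub_nonneg.2 hp1.le)
    (Real.rpow_nonneg hx (1 / p)) hy (by ring)
  rw [← Real.rpow_mul hx, one_div_mul_cancel hp0.ne', Real.rpow_one] at this
  have := mul_le_mul_of_nonneg_right this (wt_nonneg hX.1 hY.1 1 i j)
  linarith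

lemma young_eq {p : ℝ} (hp0 : 0 < p) (hp1 : p < 1) {X : Matrix m m ℂ} (hX : X.PosSemidef) :
    (X * mpow (mpow X (1 / p)) (1 - p)).trace.re = (mpow X (1 / p)).trace.re := by
  have hm : X * mfun (fun x => (x ^ (1 / p)) ^ (1 - p)) X = mfun (fun x => x ^ (1 / p)) X := by
    rw [mfun_eq_cfc hX.1, mfun_eq_cfc hX.1]
    nth_rewrite 1 [← cfc_id' ℝ X hX.1.isSelfAdjoint]
    have hfin := X.finite_real_spectrum
    rw [← cfc_mul _ _ X (hfin.continuousOn _) (hfin.continuousOn _)]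
    rw [← mfun_eq_cfc hX.1, ← mfun_eq_cfc hX.1]
    refine mfun_congr hX.1 _ _ fun i => ?_
    have hx := hX.eigenvalues_nonneg i
    rcases hx.eq_or_lt with h | h
    · rw [← h]
      simp [Real.zero_rpow (inv_ne_zero hp0.ne')]
    · rw [← Real.rpow_mul hx]
      nth_rewrite 1 [← Real.rpow_one (hX.1.eigenvalues i)]
      rw [← Real.rpow_add h]
      congr 1
      field_simp
      ring
  simp only [mpow]
  rw [mfun_comp hX.1, hm]

lemma conj_psd {A : Matrix m m ℂ} (hA : A.PosDef) (B : Matrix m m ℂ) (p : ℝ) :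
    (Bᴴ * mpow A p * B).PosSemidef :=
  (mfun_posSemidef hA.1 _ fun i =>
    Real.rpow_nonneg (hA.eigenvalues_pos i).le p).conjTranspose_mul_mul_same B

lemma mpow_psd {X : Matrix m m ℂ} (hX : X.PosSemidef) (p : ℝ) : (mpow X p).PosSemidef :=
  mfun_posSemidef hX.1 _ fun i => Real.rpow_nonneg (hX.eigenvalues_nonneg i) p

lemma mpow_one {A : Matrix m m ℂ} (hA : A.IsHermitian) : mpow A 1 = A := by
  simp only [mpow, Real.rpow_one]
  exact mfun_id hA

end EpsteinAux

theorem epstein_concavity {n : ℕ} (B : Matrix (Fin n) (Fin n) ℂ) (p : ℝ)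
    (hp0 : 0 < p) (hp1 : p ≤ 1) (A₀ A₁ : Matrix (Fin n) (Fin n) ℂ)
    (hA₀ : A₀.PosDef) (hA₁ : A₁.PosDef) (t : ℝ) (ht0 : 0 ≤ t) (ht1 : t ≤ 1) :
    (1 - t) * (mpow (Bᴴ * mpow A₀ p * B) (1/p)).trace.re +
        t * (mpow (Bᴴ * mpow A₁ p * B) (1/p)).trace.re ≤
      (mpow (Bᴴ * mpow (((1 - t : ℝ) : ℂ) • A₀ + ((t : ℝ) : ℂ) • A₁) p * B) (1/p)).trace.re := by
  have hA := comb_posDef hA₀ hA₁ ht0 ht1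
  have hX₀ := conj_psd hA₀ B p
  have hX₁ := conj_psd hA₁ B p
  have hX := conj_psd hA B p
  rcases hp1.eq_or_lt with rfl | hp1
  · rw [one_div_one, mpow_one hX₀.1, mpow_one hX₁.1, mpow_one hX.1, mpow_one hA₀.1,
      mpow_one hA₁.1, mpow_one hA.1]
    simp only [Matrix.mul_add, Matrix.add_mul, Matrix.mul_smul, Matrix.smul_mul,
      Matrix.trace_add, Matrix.trace_smul, Complex.add_re, smul_eq_mul, Complex.re_ofReal_mul]
    exact le_rfl
  · have hY₀ := mpow_psd hX₀ (1 / p)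
    have hY₁ := mpow_psd hX₁ (1 / p)
    have hY := comb_posSemidef hY₀ hY₁ ht0 ht1
    have hl := lieb_concave (q := 1 - p) ⟨by linarith, by linarith⟩ hA₀ hA₁ hY₀ hY₁ B ht0 ht1
    rw [sub_sub_cancel, young_eq hp0 hp1 hX₀, young_eq hp0 hp1 hX₁] at hl
    have hy := young_trace hp0 hp1 hX hY
    have htr : (((1 - t : ℝ) : ℂ) • mpow (Bᴴ * mpow A₀ p * B) (1 / p) +
        ((t : ℝ) : ℂ) • mpow (Bᴴ * mpow A₁ p * B) (1 / p)).trace.re =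
        (1 - t) * (mpow (Bᴴ * mpow A₀ p * B) (1/p)).trace.re +
        t * (mpow (Bᴴ * mpow A₁ p * B) (1/p)).trace.re := by
      simp only [Matrix.trace_add, Matrix.trace_smul, Complex.add_re, smul_eq_mul,
        Complex.re_ofReal_mul]
    rw [htr] at hy
    have hfin := hl.trans hy
    refine le_of_mul_le_mul_left ?_ hp0
    linarith
end

section
/- For positive definite n×n matrices ρ, σ with tr(ρ) = 1 and α > 1, the sandwiched Rényi relative entropy D_α(ρ‖σ) = (α−1)^{−1} log tr((σ^{(1−α)/(2α)} ρ σ^{(1−α)/(2α)})^α) satisfies D_α(ρ‖σ) ≤ D'_α(ρ‖σ) = (α−1)^{−1} log tr(σ^{1−α} ρ^α). -/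
open Matrix ComplexOrder

/-- Complex powers of a positive definite matrix. -/
noncomputable def cpw {m : Type*} [Fintype m] [DecidableEq m]
    {A : Matrix m m ℂ} (hA : A.PosDef) (z : ℂ) : Matrix m m ℂ :=
  (hA.1.eigenvectorUnitary : Matrix m m ℂ) *
      Matrix.diagonal (fun i => ((hA.1.eigenvalues i : ℂ)) ^ z) *
      (star (hA.1.eigenvectorUnitary : Matrix m m ℂ))

section
variable {m : Type*} [Fintype m] [DecidableEq m] {A : Matrix m m ℂ}

lemma cpw_ofReal (hA : A.PosDef) (p : ℝ) : mpow A p = cpw hA (p : ℂ) := by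
  unfold mpow mfun cpw
  rw [dif_pos hA.1]
  congr 3
  funext i
  rw [Complex.ofReal_cpow (hA.eigenvalues_pos i).le]

lemma cpw_mul (hA : A.PosDef) (z w : ℂ) : cpw hA z * cpw hA w = cpw hA (z + w) := by
  unfold cpw
  have h : (star (hA.1.eigenvectorUnitary : Matrix m m ℂ)) *
    (hA.1.eigenvectorUnitary : Matrix m m ℂ) = 1 := Unitary.coe_star_mul_self _
  generalize (hA.1.eigenvectorUnitary : Matrix m m ℂ) = U at h
  calc _ = U * diagonal (fun i => ((hA.1.eigenvalues i : ℂ)) ^ z) * (star U * U) *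
        diagonal (fun i => ((hA.1.eigenvalues i : ℂ)) ^ w) * star U := by
          simp only [Matrix.mul_assoc]
    _ = _ := by
      rw [h, Matrix.mul_one, Matrix.mul_assoc U, diagonal_mul_diagonal]
      congr 3
      funext i
      rw [Complex.cpow_add]
      exact_mod_cast (hA.eigenvalues_pos i).ne'

lemma cpw_zero (hA : A.PosDef) : cpw hA 0 = 1 := by
  unfold cpw
  simp

lemma cpw_one (hA : A.PosDef) : cpw hA 1 = A := by
  conv_rhs => rw [hA.1.spectral_theorem]
  unfold cpw
  rw [Unitary.conjStarAlgAut_apply]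
  congr 3
  funext i
  simp

lemma cpw_conjTranspose (hA : A.PosDef) (z : ℂ) : (cpw hA z)ᴴ = cpw hA (star z) := by
  unfold cpw
  simp only [conjTranspose_mul, star_eq_conjTranspose, conjTranspose_conjTranspose,
    diagonal_conjTranspose, Matrix.mul_assoc]
  congr 3
  funext i
  simp only [Pi.star_apply]
  have : (Complex.arg (hA.1.eigenvalues i : ℂ)) ≠ Real.pi := by
    rw [Complex.arg_ofReal_of_nonneg (hA.eigenvalues_pos i).le]
    exact Real.pi_pos.ne
  have h := Complex.cpow_conj (hA.1.eigenvalues i : ℂ) z this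
  rw [Complex.conj_ofReal] at h
  exact h.symm

/-- entrywise differentiable, and bounded on the strip -/
def GoodF (f : ℂ → Matrix m m ℂ) : Prop :=
  (∀ i j, Differentiable ℂ (fun z => f z i j)) ∧
  ∀ i j, ∃ C, ∀ z : ℂ, 0 ≤ z.re → z.re ≤ 1 → ‖f z i j‖ ≤ C

lemma GoodF.mul {f g : ℂ → Matrix m m ℂ} (hf : GoodF f) (hg : GoodF g) :
    GoodF (fun z => f z * g z) := by
  constructor
  · intro i j
    simp only [Matrix.mul_apply]
    exact Differentiable.fun_sum fun k _ => (hf.1 i k).mul (hg.1 k j)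
  · intro i j
    choose C hC using hf.2
    choose D hD using hg.2
    refine ⟨∑ k, C i k * D k j, fun z h0 h1 => ?_⟩
    simp only [Matrix.mul_apply]
    refine (norm_sum_le _ _).trans (Finset.sum_le_sum fun k _ => ?_)
    rw [norm_mul]
    exact mul_le_mul (hC i k z h0 h1) (hD k j z h0 h1) (norm_nonneg _)
      ((norm_nonneg _).trans (hC i k z h0 h1))

lemma GoodF.const (M : Matrix m m ℂ) : GoodF (fun _ => M) :=
  ⟨fun _ _ => differentiable_const _, fun i j => ⟨‖M i j‖, fun _ _ _ => le_rfl⟩⟩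

lemma GoodF.cpw (hA : A.PosDef) (a b : ℝ) : GoodF (fun z => cpw hA (a * z + b)) := by
  unfold _root_.cpw
  refine GoodF.mul (GoodF.mul (GoodF.const _) ?_) (GoodF.const _)
  constructor
  · intro i j
    by_cases h : i = j
    · subst h
      simp only [diagonal_apply_eq]
      refine Differentiable.const_cpow (by fun_prop) (Or.inl ?_)
      exact_mod_cast (hA.eigenvalues_pos i).ne'
    · simp [diagonal_apply_ne _ h]
  · intro i j
    by_cases h : i = j
    · subst h
      refine ⟨Real.exp (|Real.log (hA.1.eigenvalues i)| * (|a| + |b|)), fun z h0 h1 => ?_⟩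
      simp only [diagonal_apply_eq]
      rw [Complex.norm_cpow_eq_rpow_re_of_pos (hA.eigenvalues_pos i),
        Real.rpow_def_of_pos (hA.eigenvalues_pos i)]
      apply Real.exp_le_exp.2
      refine (le_abs_self _).trans ?_
      rw [abs_mul]
      refine mul_le_mul_of_nonneg_left ?_ (abs_nonneg _)
      have : ((a : ℂ) * z + b).re = a * z.re + b := by simp
      rw [this]
      refine (abs_add_le _ _).trans ?_
      refine add_le_add_left ?_ _
      rw [abs_mul, abs_of_nonneg h0]
      exact mul_le_of_le_one_right (abs_nonneg _) h1
    · exact ⟨0, by simp [diagonal_apply_ne _ h]⟩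

lemma trace_mul_ct (M : Matrix m m ℂ) :
    (M * Mᴴ).trace = ((∑ i, ∑ j, ‖M i j‖ ^ 2 : ℝ) : ℂ) := by
  simp only [Matrix.trace, Matrix.diag, Matrix.mul_apply, conjTranspose_apply]
  push_cast
  refine Finset.sum_congr rfl fun i _ => Finset.sum_congr rfl fun j _ => ?_
  exact Complex.mul_conj' _

lemma norm_trace_mul_le (P Q : Matrix m m ℂ) :
    ‖(P * Q).trace‖ ≤ ((P * Pᴴ).trace.re + (Q * Qᴴ).trace.re) / 2 := by
  rw [trace_mul_ct, trace_mul_ct, Complex.ofReal_re, Complex.ofReal_re,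
    Finset.sum_comm (f := fun i j => ‖Q i j‖ ^ 2), ← Finset.sum_add_distrib, Finset.sum_div]
  simp only [Matrix.trace, Matrix.diag, Matrix.mul_apply]
  refine (norm_sum_le _ _).trans (Finset.sum_le_sum fun i _ => ?_)
  rw [← Finset.sum_add_distrib, Finset.sum_div]
  refine (norm_sum_le _ _).trans (Finset.sum_le_sum fun j _ => ?_)
  rw [norm_mul]
  nlinarith [sq_nonneg (‖P i j‖ - ‖Q j i‖)]

lemma cpw_mul_ct (hA : A.PosDef) (z : ℂ) : cpw hA z * (cpw hA z)ᴴ = cpw hA ((2 * z.re : ℝ) : ℂ) := by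
  rw [cpw_conjTranspose, cpw_mul]
  congr 1
  exact Complex.add_conj z

lemma cpw_ct_mul (hA : A.PosDef) (z : ℂ) : (cpw hA z)ᴴ * cpw hA z = cpw hA ((2 * z.re : ℝ) : ℂ) := by
  rw [cpw_conjTranspose, cpw_mul, add_comm]
  congr 1
  exact Complex.add_conj z

lemma trace_cpw (hA : A.PosDef) (p : ℝ) :
    (cpw hA (p : ℂ)).trace = ((∑ i, (hA.1.eigenvalues i) ^ p : ℝ) : ℂ) := by
  unfold cpw
  rw [Matrix.trace_mul_comm, ← Matrix.mul_assoc, Unitary.coe_star_mul_self, Matrix.one_mul,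
    trace_diagonal]
  push_cast
  refine Finset.sum_congr rfl fun i _ => ?_
  rw [Complex.ofReal_cpow (hA.eigenvalues_pos i).le]

end

lemma key {m : Type*} [Fintype m] [DecidableEq m] {X R S : Matrix m m ℂ} (hX : X.PosDef)
    (hR : R.PosDef) (hS : S.PosDef) (α : ℝ) (hα : 1 < α)
    (h : X = cpw hS (((1 - α) / (2 * α) : ℝ) : ℂ) * R * cpw hS (((1 - α) / (2 * α) : ℝ) : ℂ)) :
    (cpw hX α).trace.re ≤ (cpw hS ((1 - α : ℝ) : ℂ) * cpw hR α).trace.re := by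
  set L := (cpw hX α).trace.re with hL
  set T := (cpw hS ((1 - α : ℝ) : ℂ) * cpw hR α).trace.re with hT
  have hα0 : 0 < α := by linarith
  -- the interpolating function
  let s : ℂ → Matrix m m ℂ := fun z => cpw hS (((1 - α) / 2 : ℝ) * z + (0 : ℝ))
  let r : ℂ → Matrix m m ℂ := fun z => cpw hR ((α / 2 : ℝ) * z + (0 : ℝ))
  let x : ℂ → Matrix m m ℂ := fun z => cpw hX ((-α / 2 : ℝ) * z + (α / 2 : ℝ))
  let f : ℂ → Matrix m m ℂ := fun z => (x z * x z) * ((s z * r z) * (r z * s z))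
  have gs : GoodF s := GoodF.cpw hS _ _
  have gr : GoodF r := GoodF.cpw hR _ _
  have gx : GoodF x := GoodF.cpw hX _ _
  have gf : GoodF f := (gx.mul gx).mul ((gs.mul gr).mul (gr.mul gs))
  have hss : ∀ z, s z * (s z)ᴴ = cpw hS (((1 - α) * z.re : ℝ) : ℂ) := fun z => by
    simp only [s]; rw [cpw_mul_ct]; congr 2; simp; ring
  have hss' : ∀ z, (s z)ᴴ * s z = cpw hS (((1 - α) * z.re : ℝ) : ℂ) := fun z => by
    simp only [s]; rw [cpw_ct_mul]; congr 2; simp; ring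
  have hrr : ∀ z, r z * (r z)ᴴ = cpw hR ((α * z.re : ℝ) : ℂ) := fun z => by
    simp only [r]; rw [cpw_mul_ct]; congr 2; simp; ring
  have hrr' : ∀ z, (r z)ᴴ * r z = cpw hR ((α * z.re : ℝ) : ℂ) := fun z => by
    simp only [r]; rw [cpw_ct_mul]; congr 2; simp; ring
  have hxx : ∀ z, x z * (x z)ᴴ = cpw hX ((α * (1 - z.re) : ℝ) : ℂ) := fun z => by
    simp only [x]; rw [cpw_mul_ct]; congr 2; simp; ring
  have hxx' : ∀ z, (x z)ᴴ * x z = cpw hX ((α * (1 - z.re) : ℝ) : ℂ) := fun z => by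
    simp only [x]; rw [cpw_ct_mul]; congr 2; simp; ring
  have h0 : ∀ z ∈ Complex.re ⁻¹' {0}, ‖(f z).trace‖ ≤ L := by
    intro z hz
    have hz : z.re = 0 := hz
    have e1 : s z * (s z)ᴴ = 1 := by rw [hss, hz]; simp [cpw_zero]
    have e2 : r z * (r z)ᴴ = 1 := by rw [hrr, hz]; simp [cpw_zero]
    have e3 : x z * (x z)ᴴ = cpw hX α := by rw [hxx, hz]; simp
    have := norm_trace_mul_le (x z) (x z * (s z * (r z * (r z * s z))))
    have e4 : x z * (s z * (r z * (r z * s z))) * (x z * (s z * (r z * (r z * s z))))ᴴ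
        = cpw hX α := by
      simp only [conjTranspose_mul]
      calc _ = x z * (s z * (r z * (r z * (s z * (s z)ᴴ) * (r z)ᴴ) * (r z)ᴴ) * (s z)ᴴ) * (x z)ᴴ := by
            simp only [Matrix.mul_assoc]
        _ = _ := by simp only [e1, e2, e3, Matrix.mul_one]
    rw [e4, e3] at this
    calc ‖(f z).trace‖ = ‖(x z * (x z * (s z * (r z * (r z * s z))))).trace‖ := by
          simp only [f, Matrix.mul_assoc]
      _ ≤ L := by linarith
  have h1 : ∀ z ∈ Complex.re ⁻¹' {1}, ‖(f z).trace‖ ≤ T := by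
    intro z hz
    have hz : z.re = 1 := hz
    have e1 : s z * (s z)ᴴ = cpw hS ((1 - α : ℝ) : ℂ) := by rw [hss, hz]; simp
    have e1' : (s z)ᴴ * s z = cpw hS ((1 - α : ℝ) : ℂ) := by rw [hss', hz]; simp
    have e2 : r z * (r z)ᴴ = cpw hR α := by rw [hrr, hz]; simp
    have e2' : (r z)ᴴ * r z = cpw hR α := by rw [hrr', hz]; simp
    have e3 : (x z)ᴴ * x z = 1 := by rw [hxx', hz]; simp [cpw_zero]
    have := norm_trace_mul_le (x z * (x z * (s z * r z))) (r z * s z)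
    have e4 : (x z * (x z * (s z * r z)) * (x z * (x z * (s z * r z)))ᴴ).trace.re = T := by
      rw [Matrix.trace_mul_comm]
      simp only [conjTranspose_mul]
      have : (r z)ᴴ * (s z)ᴴ * (x z)ᴴ * (x z)ᴴ * (x z * (x z * (s z * r z)))
        = (r z)ᴴ * ((s z)ᴴ * ((x z)ᴴ * ((x z)ᴴ * x z) * x z) * s z * r z) := by
            simp only [Matrix.mul_assoc]
      rw [this, e3, Matrix.mul_one, e3, Matrix.mul_one, e1', Matrix.trace_mul_comm,
        Matrix.mul_assoc, e2]
    have e5 : (r z * s z * (r z * s z)ᴴ).trace.re = T := by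
      simp only [conjTranspose_mul]
      have : r z * s z * ((s z)ᴴ * (r z)ᴴ) = r z * (s z * (s z)ᴴ * (r z)ᴴ) := by
            simp only [Matrix.mul_assoc]
      rw [this, e1, Matrix.trace_mul_comm, Matrix.mul_assoc, e2']
    rw [e4, e5] at this
    calc ‖(f z).trace‖ = ‖(x z * (x z * (s z * r z)) * (r z * s z)).trace‖ := by
          simp only [f, Matrix.mul_assoc]
      _ ≤ T := by linarith
  have hd : Differentiable ℂ (fun z => (f z).trace) := by
    simp only [Matrix.trace, Matrix.diag]
    exact Differentiable.fun_sum fun i _ => gf.1 i i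
  have hB : BddAbove ((norm ∘ fun z => (f z).trace) ''
      Complex.HadamardThreeLines.verticalClosedStrip 0 1) := by
    choose C hC using gf.2
    refine ⟨∑ i, C i i, ?_⟩
    rintro _ ⟨z, hz, rfl⟩
    exact (norm_sum_le _ _).trans (Finset.sum_le_sum fun i _ => hC i i z hz.1 hz.2)
  have hmem : ((α⁻¹ : ℝ) : ℂ) ∈ Complex.HadamardThreeLines.verticalClosedStrip 0 1 := by
    constructor
    · simpa using hα0.le
    · simpa using inv_le_one_of_one_le₀ hα.le
  have main := Complex.HadamardThreeLines.norm_le_interp_of_mem_verticalClosedStrip₀₁'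
    (fun z => (f z).trace) hmem hd.diffContOnCl hB h0 h1
  have hαc : (α : ℂ) ≠ 0 := by exact_mod_cast hα0.ne'
  have hf : f ((α⁻¹ : ℝ) : ℂ) = cpw hX α := by
    have a1 : s ((α⁻¹ : ℝ) : ℂ) = cpw hS (((1 - α) / (2 * α) : ℝ) : ℂ) := by
      simp only [s]; congr 1; push_cast; field_simp; ring
    have a2 : r ((α⁻¹ : ℝ) : ℂ) * r ((α⁻¹ : ℝ) : ℂ) = R := by
      simp only [r]; rw [cpw_mul]; conv_rhs => rw [← cpw_one hR]
      congr 1; push_cast; field_simp; ring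
    have a3 : x ((α⁻¹ : ℝ) : ℂ) * x ((α⁻¹ : ℝ) : ℂ) * cpw hX 1 = cpw hX α := by
      simp only [x]; rw [cpw_mul, cpw_mul]
      congr 1; push_cast; field_simp; ring
    rw [← a3, cpw_one]
    conv_rhs => rw [h]
    simp only [f]
    rw [← a1, ← a2]
    simp only [Matrix.mul_assoc]
  simp only [hf, Complex.ofReal_re] at main
  have hL0 : 0 ≤ L := by
    rw [hL, trace_cpw, Complex.ofReal_re]
    exact Finset.sum_nonneg fun i _ => Real.rpow_nonneg (hX.eigenvalues_pos i).le _
  have hT0 : 0 ≤ T := (norm_nonneg _).trans (h1 1 (by simp))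
  have hLn : ‖(cpw hX α).trace‖ = L := by
    rw [trace_cpw, Complex.norm_real, Real.norm_of_nonneg, hL, trace_cpw, Complex.ofReal_re]
    exact Finset.sum_nonneg fun i _ => Real.rpow_nonneg (hX.eigenvalues_pos i).le _
  rw [hLn] at main
  rcases hL0.eq_or_lt with h' | h'
  · rw [← h']; exact hT0
  · rw [Real.rpow_sub h', Real.rpow_one, div_mul_eq_mul_div, le_div_iff₀ (Real.rpow_pos_of_pos h' _)] at main
    have := le_of_mul_le_mul_left main h'
    exact (Real.rpow_le_rpow_iff hL0 hT0 (inv_pos.2 hα0)).1 this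

theorem sandwiched_le_traditional {n : ℕ} (ρ σ : Matrix (Fin n) (Fin n) ℂ)
    (hρ : ρ.PosDef) (hσ : σ.PosDef) (htr : ρ.trace = 1) (α : ℝ) (hα : 1 < α) :
    (α - 1)⁻¹ *
        Real.log ((mpow (mpow σ ((1 - α) / (2 * α)) * ρ * mpow σ ((1 - α) / (2 * α))) α).trace.re) ≤
      (α - 1)⁻¹ * Real.log ((mpow σ (1 - α) * mpow ρ α).trace.re) := by
  have hne : Nonempty (Fin n) := by
    by_contra hc
    rw [not_nonempty_iff] at hc
    simp [Matrix.trace] at htr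
  rw [cpw_ofReal hσ, cpw_ofReal hσ, cpw_ofReal hρ]
  set B := cpw hσ (((1 - α) / (2 * α) : ℝ) : ℂ) with hB
  have hBs : star B = B := by
    rw [star_eq_conjTranspose, hB, cpw_conjTranspose]
    congr 1
    exact Complex.conj_ofReal _
  have hBu : IsUnit B := by
    refine IsUnit.of_mul_eq_one (cpw hσ (-(((1 - α) / (2 * α) : ℝ) : ℂ))) ?_
    rw [hB, cpw_mul, add_neg_cancel, cpw_zero]
  have hX : (B * ρ * B).PosDef := by
    have := (Matrix.IsUnit.posDef_star_left_conjugate_iff (x := ρ) hBu).2 hρ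
    rwa [hBs] at this
  rw [cpw_ofReal hX]
  refine mul_le_mul_of_nonneg_left (Real.log_le_log ?_ (key hX hρ hσ α hα rfl))
    (inv_nonneg.2 (by linarith))
  rw [trace_cpw, Complex.ofReal_re]
  exact Finset.sum_pos (fun i _ => Real.rpow_pos_of_pos (hX.eigenvalues_pos i) _)
    Finset.univ_nonempty
end

section
/- (Lieb–Thirring inequality) For positive semidefinite n×n matrices A, B and real α ≥ 1, tr((B^{1/2} A B^{1/2})^α) ≤ tr(B^{α/2} A^α B^{α/2}). -/
open Matrix ComplexOrder

open scoped Matrix.Norms.L2Operator in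
theorem ltA_contr {n : ℕ} (C S : Matrix (Fin n) (Fin n) ℂ) (hC : ‖C‖ ≤ 1) :
    ∑ i, ∑ j, ‖(C * S) i j‖ ^ 2 ≤ ∑ i, ∑ j, ‖S i j‖ ^ 2 := by
  rw [Finset.sum_comm, Finset.sum_comm (f := fun i j => ‖S i j‖ ^ 2)]
  refine Finset.sum_le_sum fun j _ => ?_
  have h := Matrix.l2_opNorm_mulVec C (WithLp.toLp 2 (fun i => S i j))
  have h2 := h.trans (mul_le_of_le_one_left (norm_nonneg _) hC)
  have h3 := pow_le_pow_left₀ (norm_nonneg _) h2 2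
  rw [EuclideanSpace.norm_sq_eq, EuclideanSpace.norm_sq_eq] at h3
  simpa [Matrix.mulVec, dotProduct, Matrix.mul_apply] using h3

theorem ltA_star {n : ℕ} (S : Matrix (Fin n) (Fin n) ℂ) :
    ∑ i, ∑ j, ‖Sᴴ i j‖ ^ 2 = ∑ i, ∑ j, ‖S i j‖ ^ 2 := by
  rw [Finset.sum_comm]; simp

theorem ltA_trace {n : ℕ} (S : Matrix (Fin n) (Fin n) ℂ) :
    (Sᴴ * S).trace = ((∑ i, ∑ j, ‖S i j‖ ^ 2 : ℝ) : ℂ) := by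
  rw [Finset.sum_comm]
  simp [Matrix.trace, Matrix.mul_apply, Complex.conj_mul']

open scoped Matrix.Norms.L2Operator in
theorem ltA_main {n : ℕ} (S C D : Matrix (Fin n) (Fin n) ℂ) (hC : ‖C‖ ≤ 1) (hD : ‖D‖ ≤ 1) :
    ‖(Sᴴ * C * S * D).trace‖ ≤ ∑ i, ∑ j, ‖S i j‖ ^ 2 := by
  have hD' : ‖Dᴴ‖ ≤ 1 := by rw [Matrix.l2_opNorm_conjTranspose]; exact hD
  have h1 := ltA_contr C S hC
  have h2 := ltA_contr Dᴴ Sᴴ hD'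
  rw [ltA_star, ← Matrix.conjTranspose_mul, ltA_star] at h2
  have key : (Sᴴ * C * S * D).trace = ∑ i, ∑ j, (C * S) i j * (D * Sᴴ) j i := by
    rw [show Sᴴ * C * S * D = Sᴴ * ((C * S) * D) by simp only [Matrix.mul_assoc],
      Matrix.trace_mul_comm, Matrix.mul_assoc]
    simp [Matrix.trace, Matrix.mul_apply (M := C * S)]
  have h3 := ltA_contr D Sᴴ hD
  rw [ltA_star, Finset.sum_comm] at h3
  rw [key]
  calc ‖∑ i, ∑ j, (C * S) i j * (D * Sᴴ) j i‖
      ≤ ∑ i, ∑ j, (‖(C * S) i j‖ ^ 2 + ‖(D * Sᴴ) j i‖ ^ 2) / 2 := by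
        refine (norm_sum_le _ _).trans (Finset.sum_le_sum fun i _ => ?_)
        refine (norm_sum_le _ _).trans (Finset.sum_le_sum fun j _ => ?_)
        rw [norm_mul]
        nlinarith [sq_nonneg (‖(C * S) i j‖ - ‖(D * Sᴴ) j i‖)]
    _ ≤ _ := by
        simp only [← Finset.sum_div, Finset.sum_add_distrib]
        linarith

noncomputable def ltG (x : ℝ) (z : ℂ) : ℂ := if x = 0 then 0 else Complex.exp (z * (Real.log x : ℂ))

noncomputable def ltP {n : ℕ} {M : Matrix (Fin n) (Fin n) ℂ} (hM : M.IsHermitian) (z : ℂ) :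
    Matrix (Fin n) (Fin n) ℂ :=
  (hM.eigenvectorUnitary : Matrix (Fin n) (Fin n) ℂ) *
      Matrix.diagonal (fun i => ltG (hM.eigenvalues i) z) *
      (star (hM.eigenvectorUnitary : Matrix (Fin n) (Fin n) ℂ))

theorem ltP_add {n : ℕ} {M : Matrix (Fin n) (Fin n) ℂ} (hM : M.IsHermitian) (z w : ℂ) :
    ltP hM z * ltP hM w = ltP hM (z + w) := by
  have hu : star (hM.eigenvectorUnitary : Matrix (Fin n) (Fin n) ℂ) *
     (hM.eigenvectorUnitary : Matrix (Fin n) (Fin n) ℂ) = 1 :=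
    Unitary.coe_star_mul_self _
  have hg : Matrix.diagonal (fun i => ltG (hM.eigenvalues i) (z + w)) =
      Matrix.diagonal (fun i => ltG (hM.eigenvalues i) z) *
      Matrix.diagonal (fun i => ltG (hM.eigenvalues i) w) := by
    rw [Matrix.diagonal_mul_diagonal]
    congr 1; ext i
    unfold ltG
    split_ifs <;> simp [add_mul, Complex.exp_add]
  unfold ltP
  rw [hg]
  generalize (hM.eigenvectorUnitary : Matrix (Fin n) (Fin n) ℂ) = U at *
  simp only [Matrix.mul_assoc]
  rw [← Matrix.mul_assoc (star U) U, hu, Matrix.one_mul]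

theorem ltP_star {n : ℕ} {M : Matrix (Fin n) (Fin n) ℂ} (hM : M.IsHermitian) (z : ℂ) :
    (ltP hM z)ᴴ = ltP hM (star z) := by
  unfold ltP
  simp only [Matrix.conjTranspose_mul, Matrix.star_eq_conjTranspose, Matrix.conjTranspose_conjTranspose,
    Matrix.diagonal_conjTranspose, Matrix.mul_assoc]
  congr 3
  ext i
  simp only [Pi.star_apply, ltG]
  split_ifs <;> simp [← Complex.exp_conj]

open scoped Matrix.Norms.L2Operator in
theorem ltP_norm {n : ℕ} {M : Matrix (Fin n) (Fin n) ℂ} (hM : M.IsHermitian) (z : ℂ)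
    (hz : z.re = 0) : ‖ltP hM z‖ ≤ 1 := by
  unfold ltP
  have hs : star (hM.eigenvectorUnitary : Matrix (Fin n) (Fin n) ℂ) =
    ((star hM.eigenvectorUnitary : unitary _) : Matrix (Fin n) (Fin n) ℂ) := rfl
  rw [hs, CStarRing.norm_mul_coe_unitary, CStarRing.norm_coe_unitary_mul, Matrix.l2_opNorm_diagonal]
  refine (pi_norm_le_iff_of_nonneg zero_le_one).2 fun i => ?_
  unfold ltG
  split_ifs
  · simp
  · simp [Complex.norm_exp, hz]

theorem ltP_mpow {n : ℕ} {M : Matrix (Fin n) (Fin n) ℂ} (hM : M.PosSemidef) (s : ℝ) (hs : s ≠ 0) :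
    mpow M s = ltP hM.1 s := by
  unfold mpow mfun ltP
  rw [dif_pos hM.1]
  congr 3
  ext i
  have h0 := hM.eigenvalues_nonneg i
  unfold ltG
  beta_reduce
  split_ifs with h
  · rw [h, Real.zero_rpow hs]; simp
  · rw [Real.rpow_def_of_pos (lt_of_le_of_ne h0 (Ne.symm h)), mul_comm]; push_cast; rfl

theorem ltP_one {n : ℕ} {M : Matrix (Fin n) (Fin n) ℂ} (hM : M.PosSemidef) :
    ltP hM.1 1 = M := by
  have h := ltP_mpow hM 1 one_ne_zero
  push_cast at h
  rw [← h]
  unfold mpow mfun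
  rw [dif_pos hM.1]
  conv_rhs => rw [hM.1.spectral_theorem]
  simp [Unitary.conjStarAlgAut_apply]
  rfl

/-- Entire and bounded on the strip. -/
def ltB (f : ℂ → ℂ) : Prop :=
  Differentiable ℂ f ∧ ∃ C : ℝ, ∀ z : ℂ, z.re ∈ Set.Icc (0 : ℝ) 1 → ‖f z‖ ≤ C

theorem ltB_const (c : ℂ) : ltB (fun _ => c) :=
  ⟨differentiable_const c, ‖c‖, fun _ _ => le_rfl⟩

theorem ltB_mul {f g : ℂ → ℂ} (hf : ltB f) (hg : ltB g) : ltB (fun z => f z * g z) := by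
  obtain ⟨hf, C, hC⟩ := hf
  obtain ⟨hg, D, hD⟩ := hg
  refine ⟨hf.mul hg, C * D, fun z hz => ?_⟩
  rw [norm_mul]
  exact mul_le_mul (hC z hz) (hD z hz) (norm_nonneg _) ((norm_nonneg _).trans (hC z hz))

theorem ltB_sum {ι : Type*} (s : Finset ι) {f : ι → ℂ → ℂ} (hf : ∀ i, ltB (f i)) :
    ltB (fun z => ∑ i ∈ s, f i z) := by
  choose hd C hC using hf
  refine ⟨by fun_prop, ∑ i ∈ s, C i, fun z hz => ?_⟩
  exact (norm_sum_le _ _).trans (Finset.sum_le_sum fun i _ => hC i z hz)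

theorem ltB_G (x a b : ℝ) : ltB (fun z => ltG x (a * z + b)) := by
  unfold ltG
  split_ifs
  · exact ltB_const 0
  · refine ⟨by fun_prop, Real.exp (|a * Real.log x| + b * Real.log x), fun z hz => ?_⟩
    rw [Complex.norm_exp, Real.exp_le_exp]
    have : ((a * z + b) * (Real.log x : ℂ)).re = z.re * (a * Real.log x) + b * Real.log x := by
      simp; ring
    rw [this]
    have h1 := mul_le_mul_of_nonneg_left (le_abs_self (a * Real.log x)) hz.1
    have h2 := mul_le_mul_of_nonneg_right hz.2 (abs_nonneg (a * Real.log x))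
    linarith

theorem ltB_P {n : ℕ} {M : Matrix (Fin n) (Fin n) ℂ} (hM : M.IsHermitian) (a b : ℝ) (i j : Fin n) :
    ltB (fun z => ltP hM (a * z + b) i j) := by
  unfold ltP
  simp only [Matrix.mul_apply (N := star _), Matrix.mul_diagonal]
  exact ltB_sum _ fun k => ltB_mul (ltB_mul (ltB_const _) (ltB_G _ _ _)) (ltB_const _)

theorem ltP_real_star {n : ℕ} {M : Matrix (Fin n) (Fin n) ℂ} (hM : M.IsHermitian) (s : ℝ) :
    (ltP hM s)ᴴ = ltP hM s := by
  rw [ltP_star]; simp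

open scoped Matrix.Norms.L2Operator in
theorem lt_norm3 {n : ℕ} (P Q R : Matrix (Fin n) (Fin n) ℂ) (hP : ‖P‖ ≤ 1) (hQ : ‖Q‖ ≤ 1)
    (hR : ‖R‖ ≤ 1) : ‖P * Q * R‖ ≤ 1 := by
  have h1 := (norm_mul_le P Q).trans (mul_le_one₀ hP (norm_nonneg _) hQ)
  exact (norm_mul_le _ R).trans (mul_le_one₀ h1 (norm_nonneg _) hR)

set_option maxHeartbeats 2000000 in
theorem lt_key {n : ℕ} {A B X : Matrix (Fin n) (Fin n) ℂ}
    (hA : A.PosSemidef) (hB : B.PosSemidef) (hX : X.PosSemidef) (α : ℝ) (hα : 1 ≤ α)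
    (hXe : X = ltP hB.1 ((1 / 2 : ℝ) : ℂ) * A * ltP hB.1 ((1 / 2 : ℝ) : ℂ)) :
    ∑ i, ∑ j, ‖ltP hX.1 ((α / 2 : ℝ) : ℂ) i j‖ ^ 2 ≤
    ∑ i, ∑ j, ‖(ltP hA.1 ((α / 2 : ℝ) : ℂ) * ltP hB.1 ((α / 2 : ℝ) : ℂ)) i j‖ ^ 2 := by
  set t := ∑ i, ∑ j, ‖ltP hX.1 ((α / 2 : ℝ) : ℂ) i j‖ ^ 2 with ht
  set r := ∑ i, ∑ j, ‖(ltP hA.1 ((α / 2 : ℝ) : ℂ) * ltP hB.1 ((α / 2 : ℝ) : ℂ)) i j‖ ^ 2 with hr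
  have hα0 : (0 : ℝ) < α := by linarith
  have ht0 : 0 ≤ t := Finset.sum_nonneg fun _ _ => Finset.sum_nonneg fun _ _ => sq_nonneg _
  have hr0 : 0 ≤ r := Finset.sum_nonneg fun _ _ => Finset.sum_nonneg fun _ _ => sq_nonneg _
  let b : ℂ → Matrix (Fin n) (Fin n) ℂ := fun z => ltP hB.1 (((α / 2 : ℝ) : ℂ) * z + ((0 : ℝ) : ℂ))
  let a : ℂ → Matrix (Fin n) (Fin n) ℂ := fun z => ltP hA.1 ((α : ℂ) * z + ((0 : ℝ) : ℂ))
  let x : ℂ → Matrix (Fin n) (Fin n) ℂ := fun z => ltP hX.1 (((-α : ℝ) : ℂ) * z + (α : ℂ))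
  let F : ℂ → ℂ := fun z => (b z * a z * b z * x z).trace
  have hF : ltB F := by
    simp only [F, Matrix.trace, Matrix.diag, Matrix.mul_apply]
    exact ltB_sum _ fun i => ltB_sum _ fun j => ltB_mul (ltB_sum _ fun k => ltB_mul
      (ltB_sum _ fun l => ltB_mul (ltB_P _ _ _ _ _) (ltB_P _ _ _ _ _)) (ltB_P _ _ _ _ _))
      (ltB_P _ _ _ _ _)
  have h0 : ∀ z ∈ Complex.re ⁻¹' {(0 : ℝ)}, ‖F z‖ ≤ t := by
    intro z hz
    have hz : z.re = 0 := hz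
    have := ltA_main (ltP hX.1 ((α / 2 : ℝ) : ℂ)) (ltP hX.1 (-α * z)) (b z * a z * b z)
      (ltP_norm _ _ (by simp [hz])) (lt_norm3 _ _ _ (ltP_norm _ _ (by simp [hz]))
        (ltP_norm _ _ (by simp [hz])) (ltP_norm _ _ (by simp [hz])))
    rw [ltP_real_star, ltP_add, ltP_add, Matrix.trace_mul_comm] at this
    have e : ((α / 2 : ℝ) : ℂ) + -α * z + ((α / 2 : ℝ) : ℂ) = ((-α : ℝ) : ℂ) * z + (α : ℂ) := by
      push_cast; ring
    rw [e] at this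
    exact this
  have h1 : ∀ z ∈ Complex.re ⁻¹' {(1 : ℝ)}, ‖F z‖ ≤ r := by
    intro z hz
    have hz : z.re = 1 := hz
    have := ltA_main (ltP hA.1 ((α / 2 : ℝ) : ℂ) * ltP hB.1 ((α / 2 : ℝ) : ℂ))
      (ltP hA.1 (α * z - α))
      (ltP hB.1 (((α / 2 : ℝ) : ℂ) * z - ((α / 2 : ℝ) : ℂ)) * x z *
        ltP hB.1 (((α / 2 : ℝ) : ℂ) * z - ((α / 2 : ℝ) : ℂ)))
      (ltP_norm _ _ (by simp [hz])) (lt_norm3 _ _ _ (ltP_norm _ _ (by simp [hz]))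
        (ltP_norm _ _ (by simp [hz])) (ltP_norm _ _ (by simp [hz])))
    refine le_trans (le_of_eq (congrArg norm ?_)) this
    have eb1 : b z = ltP hB.1 (((α / 2 : ℝ) : ℂ) * z - ((α / 2 : ℝ) : ℂ)) *
        ltP hB.1 ((α / 2 : ℝ) : ℂ) := by
      rw [ltP_add]; simp [b]
    have eb2 : b z = ltP hB.1 ((α / 2 : ℝ) : ℂ) *
        ltP hB.1 (((α / 2 : ℝ) : ℂ) * z - ((α / 2 : ℝ) : ℂ)) := by
      rw [ltP_add]; simp [b]
    have ea : a z = ltP hA.1 ((α / 2 : ℝ) : ℂ) * ltP hA.1 (α * z - α) *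
        ltP hA.1 ((α / 2 : ℝ) : ℂ) := by
      rw [ltP_add, ltP_add]
      simp only [a]
      congr 1
      push_cast; ring
    have : F z = (ltP hB.1 (((α / 2 : ℝ) : ℂ) * z - ((α / 2 : ℝ) : ℂ)) *
        (ltP hB.1 ((α / 2 : ℝ) : ℂ) * a z * b z * x z)).trace := by
      simp only [F]
      nth_rewrite 1 [eb1]
      simp only [Matrix.mul_assoc]
    rw [this, Matrix.trace_mul_comm, eb2, ea, Matrix.conjTranspose_mul, ltP_real_star,
      ltP_real_star]
    simp only [Matrix.mul_assoc]
  have hmid : F ((1 / α : ℝ) : ℂ) = (t : ℂ) := by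
    have hc : (α : ℂ) ≠ 0 := by exact_mod_cast hα0.ne'
    rw [ht, ← ltA_trace, ltP_real_star, ltP_add]
    have eb : b ((1 / α : ℝ) : ℂ) = ltP hB.1 ((1 / 2 : ℝ) : ℂ) := by
      simp only [b]; congr 1; push_cast; field_simp; simp
    have ea : a ((1 / α : ℝ) : ℂ) = A := by
      rw [← ltP_one hA]
      simp only [a]; congr 1; push_cast; field_simp; simp
    have ex : x ((1 / α : ℝ) : ℂ) = ltP hX.1 (α - 1) := by
      simp only [x]; congr 1; push_cast; field_simp; ring
    simp only [F]
    rw [eb, ea, ex, ← hXe]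
    nth_rewrite 1 [← ltP_one hX]
    rw [ltP_add]
    congr 2
    push_cast; ring
  have hin : (1 / α : ℝ) ∈ Set.Icc (0 : ℝ) 1 := ⟨by positivity, by rw [div_le_one hα0]; exact hα⟩
  have H := Complex.HadamardThreeLines.norm_le_interp_of_mem_verticalClosedStrip₀₁' F
    (z := ((1 / α : ℝ) : ℂ)) (a := t) (b := r)
    (by simpa only [Complex.HadamardThreeLines.verticalClosedStrip, Set.mem_preimage,
      Complex.ofReal_re] using hin) hF.1.diffContOnCl
    (by
      obtain ⟨C, hC⟩ := hF.2
      refine ⟨C, ?_⟩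
      rintro _ ⟨z, hz, rfl⟩
      exact hC z hz) h0 h1
  rw [hmid, Complex.norm_real, Real.norm_of_nonneg ht0, Complex.ofReal_re] at H
  rcases ht0.eq_or_lt with h | h
  · rw [← h]; exact hr0
  · rw [Real.rpow_sub h, Real.rpow_one, div_mul_eq_mul_div, le_div_iff₀ (by positivity)] at H
    have H' := le_of_mul_le_mul_left H h
    exact (Real.rpow_le_rpow_iff ht0 hr0 (by positivity)).1 H'

theorem lieb_thirring {n : ℕ} (A B : Matrix (Fin n) (Fin n) ℂ)
    (hA : A.PosSemidef) (hB : B.PosSemidef) (α : ℝ) (hα : 1 ≤ α) :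
    (mpow (mpow B (1/2) * A * mpow B (1/2)) α).trace ≤
      (mpow B (α/2) * mpow A α * mpow B (α/2)).trace := by
  have h2 : (0 : ℝ) < α / 2 := by linarith
  have hXe : mpow B (1 / 2) * A * mpow B (1 / 2) =
      ltP hB.1 ((1 / 2 : ℝ) : ℂ) * A * ltP hB.1 ((1 / 2 : ℝ) : ℂ) := by
    rw [ltP_mpow hB (1 / 2) (by norm_num)]
  have hX : (mpow B (1 / 2) * A * mpow B (1 / 2)).PosSemidef := by
    have := hA.mul_mul_conjTranspose_same (ltP hB.1 ((1 / 2 : ℝ) : ℂ))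
    rw [ltP_real_star] at this
    rw [hXe]
    exact this
  have key := lt_key hA hB hX α hα hXe
  rw [ltP_mpow hX α (by linarith), ltP_mpow hB (α / 2) h2.ne', ltP_mpow hA α (by linarith)]
  have e : ((α : ℝ) : ℂ) = ((α / 2 : ℝ) : ℂ) + ((α / 2 : ℝ) : ℂ) := by push_cast; ring
  have e1 : (ltP hX.1 (α : ℂ)).trace =
      ((∑ i, ∑ j, ‖ltP hX.1 ((α / 2 : ℝ) : ℂ) i j‖ ^ 2 : ℝ) : ℂ) := by
    rw [← ltA_trace, ltP_real_star, ltP_add, ← e]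
  have e2 : (ltP hB.1 ((α / 2 : ℝ) : ℂ) * ltP hA.1 (α : ℂ) * ltP hB.1 ((α / 2 : ℝ) : ℂ)).trace =
      ((∑ i, ∑ j, ‖(ltP hA.1 ((α / 2 : ℝ) : ℂ) * ltP hB.1 ((α / 2 : ℝ) : ℂ)) i j‖ ^ 2 : ℝ) : ℂ) := by
    rw [← ltA_trace, Matrix.conjTranspose_mul, ltP_real_star, ltP_real_star]
    rw [e, ← ltP_add hA.1]
    simp only [Matrix.mul_assoc]
  rw [e1, e2]
  exact_mod_cast key
end
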